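/- Let R be a Noetherian domain and M a finitely generated projective R-module of constant rank r ≥ 1 which is not stably free. Let A = Sym_R(M ⊕ R), the symmetric algebra of M ⊕ R over R, and let W ∈ A be the degree-one element corresponding to the generator 1 of the free summand R. Then: (i) A is an 𝔸^{r+1}-fibration over R; (ii) W is a residual variable of A over R; and (iii) A is not a stably polynomial algebra over R[W], i.e., there is no ℓ ∈ ℕ with A[Z₁,…,Z_ℓ] isomorphic as an R[W]-algebra to a polynomial ring in ℓ + r variables over R[W]. -/

import Mathlib

open TensorProduct

noncomputable section

/-- The residue field `κ(P) = R_P / P R_P` of a commutative ring `R` at a prime ideal `P`. -/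
abbrev ResidueFieldAt (R : Type*) [CommRing R] (P : Ideal R) [P.IsPrime] : Type _ :=
  IsLocalRing.ResidueField (Localization.AtPrime P)

/-- `A ⊗_R κ(P)` is a polynomial ring in `n` variables over `B ⊗_R κ(P)`
for every prime ideal `P` of `R`. -/
def FibersPolynomialOver (R B A : Type*) [CommRing R] [CommRing B] [CommRing A]
    [Algebra R B] [Algebra R A] [Algebra B A] [IsScalarTower R B A] (n : ℕ) : Prop :=
  ∀ (P : Ideal R) (_ : P.IsPrime),
    letI : Algebra (ResidueFieldAt R P ⊗[R] B) (ResidueFieldAt R P ⊗[R] A) :=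
      (Algebra.TensorProduct.map (AlgHom.id R (ResidueFieldAt R P))
        (IsScalarTower.toAlgHom R B A)).toRingHom.toAlgebra
    Nonempty ((ResidueFieldAt R P ⊗[R] A) ≃ₐ[ResidueFieldAt R P ⊗[R] B]
      MvPolynomial (Fin n) (ResidueFieldAt R P ⊗[R] B))

/-- `A` is an `𝔸ⁿ`-fibration over `R`: a finitely generated flat `R`-algebra all of whose
fibres are polynomial rings in `n` variables. -/
def IsAffineFibration (R A : Type*) [CommRing R] [CommRing A] [Algebra R A] (n : ℕ) : Prop :=
  Algebra.FiniteType R A ∧ Module.Flat R A ∧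
  ∀ (P : Ideal R) (_ : P.IsPrime),
    Nonempty ((ResidueFieldAt R P ⊗[R] A) ≃ₐ[ResidueFieldAt R P]
      MvPolynomial (Fin n) (ResidueFieldAt R P))

/-- `W` is an `m`-tuple residual variable of the `𝔸ⁿ`-fibration `A` over `R`. -/
def IsResidualVariable (R A : Type*) [CommRing R] [CommRing A] [Algebra R A]
    (n m : ℕ) (W : Fin m → A) : Prop :=
  AlgebraicIndependent R W ∧
  FibersPolynomialOver R (Algebra.adjoin R (Set.range W)) A (n - m)

/-- A module `M` over `A` is stably free if `M ⊕ Aˢ ≅ Aᵗ` for some `s, t`. -/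
def IsStablyFree (A M : Type*) [CommRing A] [AddCommGroup M] [Module A M] : Prop :=
  ∃ s t : ℕ, Nonempty ((M × (Fin s → A)) ≃ₗ[A] (Fin t → A))

end

universe u v w

/-- `A`, together with the `R`-linear map `φ : M →ₗ[R] A`, is a symmetric algebra of the
`R`-module `M`: every `R`-linear map from `M` to a commutative `R`-algebra factors
uniquely through an `R`-algebra homomorphism from `A`. -/
def IsSymAlgebra (R : Type u) (M : Type v) (A : Type w)
    [CommRing R] [AddCommGroup M] [Module R M]
    [CommRing A] [Algebra R A] (φ : M →ₗ[R] A) : Prop :=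
  ∀ (C : Type (max u v w)) [CommRing C] [Algebra R C] (f : M →ₗ[R] C),
    ∃! g : A →ₐ[R] C, ∀ x : M, g (φ x) = f x

/-!
Write `B = R[W]`. Then `A` is a symmetric algebra of `B ⊗ M` over `B`, so that `A[Z₁, …, Z_ℓ]` is a
symmetric algebra of `(B ⊗ M) ⊕ B^ℓ`. A symmetric algebra determines its module, which is the
cotangent space at any `B`-point. Hence an isomorphism of `A[Z₁, …, Z_ℓ]` with a polynomial ring
over `B` makes `B ⊗ M` stably free, and the base change `B → R`, `W ↦ 0`, makes `M` stably free.
The assertions on fibres hold because `M` becomes free over the residue fields `κ(P)`, and `A`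
inherits projectivity from `M`.
-/

section SymmetricAlgebra

open LinearMap (coprod inl inr)

variable {R M N A B : Type*} [CommSemiring R] [AddCommMonoid M] [Module R M]
  [AddCommMonoid N] [Module R N] [CommSemiring A] [Algebra R A]

lemma isSymmetricAlgebra_of_comp_eq {φ : M →ₗ[R] A} (g : A →ₐ[R] SymmetricAlgebra R M)
    (hg : g.toLinearMap ∘ₗ φ = SymmetricAlgebra.ι R M)
    (hφ : (SymmetricAlgebra.lift φ).comp g = AlgHom.id R A) : IsSymmetricAlgebra φ := by
  have hgφ : g.comp (SymmetricAlgebra.lift φ) = AlgHom.id R _ := by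
    ext x
    simpa using congr($hg x)
  exact .of_equiv (.ofAlgHom _ g hφ hgφ) (SymmetricAlgebra.lift_comp_ι φ)

lemma isSymmetricAlgebra_comp_linearEquiv {φ : M →ₗ[R] A} (h : IsSymmetricAlgebra φ)
    (e : N ≃ₗ[R] M) : IsSymmetricAlgebra (φ ∘ₗ e.toLinearMap) := by
  refine isSymmetricAlgebra_of_comp_eq (h.lift (SymmetricAlgebra.ι R N ∘ₗ e.symm.toLinearMap))
    ?_ (h.algHom_ext ?_) <;> ext <;> simp

lemma isSymmetricAlgebra_baseChange {φ : M →ₗ[R] A} (h : IsSymmetricAlgebra φ)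
    (S : Type*) [CommSemiring S] [Algebra R S] : IsSymmetricAlgebra (φ.baseChange S) := by
  let g : S ⊗[R] A →ₐ[S] SymmetricAlgebra S (S ⊗[R] M) :=
    Algebra.TensorProduct.lift (Algebra.ofId S _)
      (h.lift ((SymmetricAlgebra.ι S (S ⊗[R] M)).restrictScalars R ∘ₗ TensorProduct.mk R S M 1))
      (fun _ _ => Commute.all _ _)
  refine isSymmetricAlgebra_of_comp_eq g ?_ ?_
  · ext x
    simp [g]
  · refine Algebra.TensorProduct.ext (by ext) (h.algHom_ext ?_)
    ext x
    simp [g]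

lemma adjoin_range_eq_top_of_isSymmetricAlgebra {φ : M →ₗ[R] A} (h : IsSymmetricAlgebra φ) :
    Algebra.adjoin R (Set.range φ) = ⊤ := by
  refine Algebra.eq_top_iff.2 fun a => ?_
  induction a using h.induction with
  | algebraMap r => exact algebraMap_mem _ r
  | ι x => exact Algebra.subset_adjoin ⟨x, rfl⟩
  | mul a b ha hb => exact mul_mem ha hb
  | add a b ha hb => exact add_mem ha hb

lemma finiteType_of_isSymmetricAlgebra [Module.Finite R M] {φ : M →ₗ[R] A}
    (h : IsSymmetricAlgebra φ) : Algebra.FiniteType R A := by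
  classical
  obtain ⟨s, hs⟩ := Module.Finite.fg_top (R := R) (M := M)
  refine ⟨s.image φ, ?_⟩
  rw [Finset.coe_image, ← Algebra.adjoin_span, Submodule.span_image, hs, Submodule.map_top,
    LinearMap.coe_range, adjoin_range_eq_top_of_isSymmetricAlgebra h]

lemma projective_of_isSymmetricAlgebra [Module.Projective R M] {φ : M →ₗ[R] A}
    (h : IsSymmetricAlgebra φ) : Module.Projective R A := by
  obtain ⟨s, hs⟩ := Module.projective_def'.1 (inferInstance : Module.Projective R M)
  let i : A →ₐ[R] MvPolynomial M R := h.lift (Finsupp.linearCombination R MvPolynomial.X ∘ₗ s)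
  let p : MvPolynomial M R →ₐ[R] A := MvPolynomial.aeval φ
  have hpX : p.toLinearMap ∘ₗ Finsupp.linearCombination R MvPolynomial.X =
      φ ∘ₗ Finsupp.linearCombination R id := by
    ext x
    simp [p]
  have hpi : p.comp i = AlgHom.id R A := by
    refine h.algHom_ext (LinearMap.ext fun x => ?_)
    simpa [i, show Finsupp.linearCombination R id (s x) = x from congr($hs x)]
      using congr($hpX (s x))
  exact .of_split i.toLinearMap p.toLinearMap congr(($hpi).toLinearMap)

lemma isSymmetricAlgebra_mvPolynomial {φ : M →ₗ[R] A} (h : IsSymmetricAlgebra φ) (σ : Type*) :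
    IsSymmetricAlgebra (coprod ((IsScalarTower.toAlgHom R A (MvPolynomial σ A)).toLinearMap ∘ₗ φ)
      (Finsupp.linearCombination R MvPolynomial.X)) := by
  let g : MvPolynomial σ A →ₐ[R] SymmetricAlgebra R (M × (σ →₀ R)) :=
    MvPolynomial.aevalTower (h.lift (SymmetricAlgebra.ι R _ ∘ₗ inl R M (σ →₀ R)))
      fun i => SymmetricAlgebra.ι R _ (0, Finsupp.single i 1)
  refine isSymmetricAlgebra_of_comp_eq g ?_ ?_
  · ext <;> simp [g]
  · refine MvPolynomial.algHom_ext' (h.algHom_ext ?_) fun i => ?_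
    · ext x
      simp [g]
    · simp [g]

lemma isSymmetricAlgebra_liftBaseChange [CommSemiring B] [Algebra R B] [Algebra B A]
    [IsScalarTower R B A] {φ : M × N →ₗ[R] A} (h : IsSymmetricAlgebra φ) {ψ : N →ₗ[R] B}
    (hψ : Algebra.adjoin R (Set.range ψ) = ⊤) (hψφ : ∀ y, algebraMap B A (ψ y) = φ (0, y)) :
    IsSymmetricAlgebra ((φ ∘ₗ inl R M N).liftBaseChange B) := by
  let S := SymmetricAlgebra B (B ⊗[R] M)
  let gR : A →ₐ[R] S := h.lift (coprod
    ((SymmetricAlgebra.ι B _).restrictScalars R ∘ₗ TensorProduct.mk R B M 1)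
    ((IsScalarTower.toAlgHom R B S).toLinearMap ∘ₗ ψ))
  have hgR : gR.comp (IsScalarTower.toAlgHom R B A) = IsScalarTower.toAlgHom R B S := by
    refine AlgHom.ext_of_adjoin_eq_top hψ ?_
    rintro _ ⟨y, rfl⟩
    simp [gR, hψφ]
  let g : A →ₐ[B] S := { gR with commutes' := fun b => congr($hgR b) }
  have hg (a : A) : g a = gR a := rfl
  refine isSymmetricAlgebra_of_comp_eq g ?_ ?_
  · ext x
    simp [hg, gR]
  · have hR : ((SymmetricAlgebra.lift ((φ ∘ₗ inl R M N).liftBaseChange B)).restrictScalars R).comp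
        gR = AlgHom.id R A := by
      refine h.algHom_ext ?_
      ext x
      · simp [gR]
      · simp [S, gR, hψφ]
    ext a
    exact congr($hR a)

lemma nonempty_algEquiv_mvPolynomial {φ : M →ₗ[R] A} (h : IsSymmetricAlgebra φ) {ι : Type*}
    (b : Module.Basis ι R M) : Nonempty (A ≃ₐ[R] MvPolynomial ι R) :=
  ⟨h.equiv.symm.trans (SymmetricAlgebra.equivMvPolynomial b)⟩

lemma prodRight_symm_zero_left (S : Type*) [CommSemiring S] [Algebra R S] (y : S ⊗[R] N) :
    (prodRight R S S M N).symm (0, y) = (inr R M N).baseChange S y := by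
  rw [LinearEquiv.symm_apply_eq]
  induction y with
  | zero => simp
  | tmul s y => simp
  | add y z hy hz => rw [map_add, map_add, ← hy, ← hz]; simp

lemma adjoin_range_baseChange_eq_top {ψ : N →ₗ[R] A} (hψ : Algebra.adjoin R (Set.range ψ) = ⊤)
    (S : Type*) [CommSemiring S] [Algebra R S] :
    Algebra.adjoin S (Set.range (ψ.baseChange S)) = ⊤ := by
  rw [eq_top_iff, ← Algebra.TensorProduct.adjoin_one_tmul_image_eq_top (A := S) _ hψ]
  refine Algebra.adjoin_mono ?_
  rintro _ ⟨_, ⟨y, rfl⟩, rfl⟩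
  exact ⟨1 ⊗ₜ y, LinearMap.baseChange_tmul ..⟩

lemma exists_linearMap_adjoin_range_eq_top (f : N →ₗ[R] A) {s : Set A}
    (hs : Submodule.span R s = LinearMap.range f) :
    ∃ ψ : N →ₗ[R] Algebra.adjoin R s,
      Algebra.adjoin R (Set.range ψ) = ⊤ ∧ ∀ y, algebraMap _ A (ψ y) = f y := by
  have hf (y : N) : f y ∈ Algebra.adjoin R s :=
    Algebra.span_le_adjoin R s (hs ▸ LinearMap.mem_range_self f y)
  have hfs : Algebra.adjoin R (Set.range f) = Algebra.adjoin R s := by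
    rw [← LinearMap.coe_range, ← hs, Algebra.adjoin_span]
  refine ⟨f.codRestrict (Algebra.adjoin R s).toSubmodule hf, ?_, fun _ => rfl⟩
  refine Subalgebra.map_injective (f := (Algebra.adjoin R s).val) Subtype.val_injective ?_
  rw [AlgHom.map_adjoin, ← Set.range_comp, Algebra.map_top, Subalgebra.range_val]
  exact hfs

end SymmetricAlgebra

section Differential

variable {R M N A B : Type*} [CommSemiring R] [AddCommMonoid M] [Module R M]
  [AddCommMonoid N] [Module R N] [CommSemiring A] [Algebra R A] [CommSemiring B] [Algebra R B]
  {φ : M →ₗ[R] A} {ψ : N →ₗ[R] B} [Module Rᵐᵒᵖ M] [IsCentralScalar R M]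
  [Module Rᵐᵒᵖ N] [IsCentralScalar R N]

open TrivSqZeroExt

/-- The first-order Taylor expansion at the `R`-point `ε` of functions on the spectrum of a
symmetric algebra of `M`: the value at `ε` together with the differential there, as an element of
the square-zero extension `R ⊕ M`. -/
noncomputable def taylorHom (h : IsSymmetricAlgebra φ) (ε : A →ₐ[R] R) :
    A →ₐ[R] TrivSqZeroExt R M :=
  h.lift ((inlAlgHom R R M).toLinearMap ∘ₗ ε.toLinearMap ∘ₗ φ + inrHom R M)

@[simp]
lemma taylorHom_apply (h : IsSymmetricAlgebra φ) (ε : A →ₐ[R] R) (x : M) :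
    taylorHom h ε (φ x) = inl (ε (φ x)) + inr x := by
  simp [taylorHom]

lemma fst_taylorHom (h : IsSymmetricAlgebra φ) (ε : A →ₐ[R] R) (a : A) :
    (taylorHom h ε a).fst = ε a := by
  have hfst : (fstHom R R M).comp (taylorHom h ε) = ε := h.algHom_ext (by ext x; simp)
  exact congr($hfst a)

/-- The linear part at the `R`-point `ε` of an algebra homomorphism `f` into a symmetric algebra of
`N`, restricted to the module `M` along `φ`. When `A` is a symmetric algebra of `M`, this is the map
that `f` induces on cotangent spaces. -/
noncomputable def linearPart (hB : IsSymmetricAlgebra ψ) (ε : B →ₐ[R] R) (φ : M →ₗ[R] A)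
    (f : A →ₐ[R] B) : M →ₗ[R] N :=
  sndHom R N ∘ₗ (taylorHom hB ε).toLinearMap ∘ₗ f.toLinearMap ∘ₗ φ

lemma map_linearPart_comp_taylorHom (hA : IsSymmetricAlgebra φ) (hB : IsSymmetricAlgebra ψ)
    (ε : B →ₐ[R] R) (f : A →ₐ[R] B) :
    (map (linearPart hB ε φ f)).comp (taylorHom hA (ε.comp f)) = (taylorHom hB ε).comp f := by
  refine hA.algHom_ext (LinearMap.ext fun x => ?_)
  ext <;> simp [linearPart, fst_taylorHom]

lemma linearPart_comp_linearPart {g : B →ₐ[R] A} (hA : IsSymmetricAlgebra φ)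
    (hB : IsSymmetricAlgebra ψ) (ε : B →ₐ[R] R) (f : A →ₐ[R] B)
    (hfg : f.comp g = AlgHom.id R B) :
    linearPart hB ε φ f ∘ₗ linearPart hA (ε.comp f) ψ g = LinearMap.id := by
  ext y
  have hmap := congr(($(map_linearPart_comp_taylorHom hA hB ε f) (g (ψ y))).snd)
  have hy : f (g (ψ y)) = ψ y := congr($hfg (ψ y))
  simpa [hy, linearPart] using hmap

end Differential

theorem nonempty_linearEquiv_of_isSymmetricAlgebra {R M N A B : Type*} [CommSemiring R]
    [AddCommMonoid M] [Module R M] [AddCommMonoid N] [Module R N] [CommSemiring A] [Algebra R A]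
    [CommSemiring B] [Algebra R B] {φ : M →ₗ[R] A} {ψ : N →ₗ[R] B} (hA : IsSymmetricAlgebra φ)
    (hB : IsSymmetricAlgebra ψ) (e : A ≃ₐ[R] B) : Nonempty (M ≃ₗ[R] N) := by
  -- `TrivSqZeroExt R M` is a ring only for a bimodule `M`.
  let : Module Rᵐᵒᵖ M := Module.compHom M ((RingHom.id R).fromOpposite mul_comm)
  let : Module Rᵐᵒᵖ N := Module.compHom N ((RingHom.id R).fromOpposite mul_comm)
  have : IsCentralScalar R M := ⟨fun _ _ => rfl⟩
  have : IsCentralScalar R N := ⟨fun _ _ => rfl⟩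
  let ε : B →ₐ[R] R := hB.lift 0
  have hε : (ε.comp e.toAlgHom).comp e.symm.toAlgHom = ε := by ext; simp
  refine ⟨.ofLinearMap (linearPart hB ε φ e.toAlgHom)
    (linearPart hA (ε.comp e.toAlgHom) ψ e.symm.toAlgHom)
    (linearPart_comp_linearPart hA hB ε _ (by ext; simp)) ?_⟩
  simpa [hε] using linearPart_comp_linearPart hB hA (ε.comp e.toAlgHom) e.symm.toAlgHom
    (g := e.toAlgHom) (by ext; simp)

section StablyFree

variable {R S M N : Type*} [CommRing R] [CommRing S] [Algebra R S]
  [AddCommGroup M] [Module R M] [AddCommGroup N] [Module R N]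

lemma IsStablyFree.of_linearEquiv (h : IsStablyFree R M) (e : M ≃ₗ[R] N) : IsStablyFree R N := by
  obtain ⟨s, t, ⟨f⟩⟩ := h
  exact ⟨s, t, ⟨(e.symm.prodCongr (.refl R _)).trans f⟩⟩

lemma IsStablyFree.baseChange (h : IsStablyFree R M) (S : Type*) [CommRing S] [Algebra R S] :
    IsStablyFree S (S ⊗[R] M) := by
  obtain ⟨s, t, ⟨f⟩⟩ := h
  exact ⟨s, t, ⟨((LinearEquiv.refl S _).prodCongr (piScalarRight R S S (Fin s)).symm).trans <|
    (prodRight R S S M (Fin s → R)).symm.trans <|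
    (f.baseChange R S _ _).trans (piScalarRight R S S (Fin t))⟩⟩

lemma IsStablyFree.of_baseChange (h : IsStablyFree S (S ⊗[R] M)) (ε : S →ₐ[R] R) :
    IsStablyFree R M := by
  let : Algebra S R := ε.toRingHom.toAlgebra
  have : IsScalarTower R S R := .of_algebraMap_eq fun r => (ε.commutes r).symm
  exact (h.baseChange R).of_linearEquiv <|
    (AlgebraTensorModule.cancelBaseChange R S R R M).trans (TensorProduct.lid R M)

variable {A B : Type*} [CommRing A] [Algebra R A] [CommRing B] [Algebra R B] [Algebra B A]
  [IsScalarTower R B A]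

theorem isStablyFree_of_stablyPolynomial {φ : M × N →ₗ[R] A} (h : IsSymmetricAlgebra φ)
    {ψ : N →ₗ[R] B} (hψ : Algebra.adjoin R (Set.range ψ) = ⊤)
    (hψφ : ∀ y, algebraMap B A (ψ y) = φ (0, y)) {ℓ m : ℕ}
    (e : MvPolynomial (Fin ℓ) A ≃ₐ[B] MvPolynomial (Fin m) B) : IsStablyFree R M := by
  have hA := isSymmetricAlgebra_mvPolynomial (isSymmetricAlgebra_liftBaseChange h hψ hψφ) (Fin ℓ)
  have hB := SymmetricAlgebra.IsSymmetricAlgebra.mvPolynomial (Fin m) (Pi.basisFun B (Fin m))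
  obtain ⟨f⟩ := nonempty_linearEquiv_of_isSymmetricAlgebra hA hB e
  have hM : IsStablyFree B (B ⊗[R] M) :=
    ⟨ℓ, m, ⟨((LinearEquiv.refl B _).prodCongr
      (Finsupp.linearEquivFunOnFinite B B _).symm).trans f⟩⟩
  exact hM.of_baseChange ((h.lift 0).comp (IsScalarTower.toAlgHom R B A))

end StablyFree

section Fibers

variable {R M N A B : Type*} [CommRing R] [AddCommGroup M] [Module R M]
  [AddCommGroup N] [Module R N] [CommRing A] [Algebra R A] [CommRing B] [Algebra R B]

lemma nonempty_basis_residueFieldAt_tensorProduct [Module.Finite R M] [Module.Flat R M]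
    (P : Ideal R) [hP : P.IsPrime] {r : ℕ} (hr : Module.rankAtStalk M ⟨P, hP⟩ = r) :
    Nonempty (Module.Basis (Fin r) (ResidueFieldAt R P) (ResidueFieldAt R P ⊗[R] M)) :=
  ⟨Module.finBasisOfFinrankEq _ _ (P.finrank_fiber_eq_rankAtStalk.trans hr)⟩

theorem isAffineFibration_of_isSymmetricAlgebra [Module.Finite R M] [Module.Projective R M] {r : ℕ}
    (hr : ∀ p, Module.rankAtStalk (R := R) M p = r) {φ : M →ₗ[R] A} (h : IsSymmetricAlgebra φ) :
    IsAffineFibration R A r := by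
  have := projective_of_isSymmetricAlgebra h
  refine ⟨finiteType_of_isSymmetricAlgebra h, inferInstance, fun P hP => ?_⟩
  obtain ⟨b⟩ := nonempty_basis_residueFieldAt_tensorProduct P (hr ⟨P, hP⟩)
  have hfiber := isSymmetricAlgebra_baseChange h (ResidueFieldAt R P)
  exact nonempty_algEquiv_mvPolynomial hfiber b

theorem fibersPolynomialOver_of_isSymmetricAlgebra [Module.Finite R M] [Module.Flat R M] {r : ℕ}
    [Algebra B A] [IsScalarTower R B A] (hr : ∀ p, Module.rankAtStalk (R := R) M p = r)
    {φ : M × N →ₗ[R] A} (h : IsSymmetricAlgebra φ) {ψ : N →ₗ[R] B}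
    (hψ : Algebra.adjoin R (Set.range ψ) = ⊤) (hψφ : ∀ y, algebraMap B A (ψ y) = φ (0, y)) :
    FibersPolynomialOver R B A r := by
  intro P hP
  obtain ⟨b⟩ := nonempty_basis_residueFieldAt_tensorProduct P (hr ⟨P, hP⟩)
  let K := ResidueFieldAt R P
  let : Algebra (K ⊗[R] B) (K ⊗[R] A) :=
    (Algebra.TensorProduct.map (AlgHom.id R K) (IsScalarTower.toAlgHom R B A)).toRingHom.toAlgebra
  have algebraMap_tmul (k : K) (x : B) :
      algebraMap (K ⊗[R] B) (K ⊗[R] A) (k ⊗ₜ x) = k ⊗ₜ algebraMap B A x := rfl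
  have : IsScalarTower K (K ⊗[R] B) (K ⊗[R] A) := .of_algebraMap_eq fun k => by
    simp [Algebra.TensorProduct.algebraMap_apply, algebraMap_tmul]
  have hK := isSymmetricAlgebra_comp_linearEquiv (isSymmetricAlgebra_baseChange h K)
    (prodRight R K K M N).symm
  have hψφK (y : K ⊗[R] N) : algebraMap (K ⊗[R] B) (K ⊗[R] A) (ψ.baseChange K y) =
      (φ.baseChange K ∘ₗ (prodRight R K K M N).symm.toLinearMap) (0, y) := by
    simp only [LinearMap.comp_apply, LinearEquiv.coe_coe, prodRight_symm_zero_left]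
    induction y with
    | zero => simp
    | tmul k y => simp [algebraMap_tmul, hψφ]
    | add y z hy hz => simp only [map_add, hy, hz]
  have hKB := isSymmetricAlgebra_liftBaseChange hK (adjoin_range_baseChange_eq_top hψ K) hψφK
  exact nonempty_algEquiv_mvPolynomial hKB (b.baseChange (K ⊗[R] B))

end Fibers

lemma IsSymAlgebra.isSymmetricAlgebra {R : Type u} {M : Type v} {A : Type w} [CommRing R]
    [AddCommGroup M] [Module R M] [CommRing A] [Algebra R A] {φ : M →ₗ[R] A}
    (hφ : IsSymAlgebra R M A φ) : IsSymmetricAlgebra φ := by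
  let eS : ULift.{max u v w} (SymmetricAlgebra R M) ≃ₐ[R] SymmetricAlgebra R M := ULift.algEquiv
  let eA : ULift.{max u v w} A ≃ₐ[R] A := ULift.algEquiv
  obtain ⟨g, hg, -⟩ := hφ _ (eS.symm.toLinearMap ∘ₗ SymmetricAlgebra.ι R M)
  obtain ⟨_, -, huniq⟩ := hφ _ (eA.symm.toLinearMap ∘ₗ φ)
  let G : A →ₐ[R] SymmetricAlgebra R M := eS.toAlgHom.comp g
  have hG (x : M) : G (φ x) = SymmetricAlgebra.ι R M x := by simp [G, hg]
  have hid : eA.symm.toAlgHom.comp ((SymmetricAlgebra.lift φ).comp G) = eA.symm.toAlgHom :=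
    (huniq _ fun x => by simp [hG]).trans (huniq _ fun x => rfl).symm
  refine isSymmetricAlgebra_of_comp_eq G (LinearMap.ext hG) ?_
  ext a
  exact eA.symm.injective congr($hid a)

section ResidualVariable

variable {R M N A : Type*} [CommRing R] [AddCommGroup M] [Module R M]
  [AddCommGroup N] [Module R N] [CommRing A] [Algebra R A]

lemma algebraicIndependent_of_isSymmetricAlgebra {φ : M × N →ₗ[R] A} (h : IsSymmetricAlgebra φ)
    {ι : Type*} (b : Module.Basis ι R N) : AlgebraicIndependent R fun i => φ (0, b i) := by
  let g : A →ₐ[R] MvPolynomial ι R := h.lift (b.constr R MvPolynomial.X ∘ₗ .snd R M N)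
  have hg : g.comp (MvPolynomial.aeval fun i => φ (0, b i)) = AlgHom.id R _ := by
    ext i
    simp [g]
  exact Function.LeftInverse.injective (g := g) fun p => congr($hg p)

theorem isResidualVariable_of_isSymmetricAlgebra [Module.Finite R M] [Module.Flat R M] {r m : ℕ}
    (hr : ∀ p, Module.rankAtStalk (R := R) M p = r) {φ : M × N →ₗ[R] A}
    (h : IsSymmetricAlgebra φ) (b : Module.Basis (Fin m) R N) :
    IsResidualVariable R A (r + m) m fun i => φ (0, b i) := by
  have hb : Submodule.span R (Set.range fun i => φ (0, b i)) =
      LinearMap.range (φ ∘ₗ LinearMap.inr R M N) := by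
    rw [LinearMap.range_eq_map, ← b.span_eq, Submodule.map_span, ← Set.range_comp]
    rfl
  obtain ⟨ψ, hψ, hψφ⟩ := exists_linearMap_adjoin_range_eq_top _ hb
  refine ⟨algebraicIndependent_of_isSymmetricAlgebra h b, ?_⟩
  rw [Nat.add_sub_cancel]
  exact fibersPolynomialOver_of_isSymmetricAlgebra hr h hψ hψφ

theorem isStablyFree_of_stablyPolynomial_adjoin {φ : M × R →ₗ[R] A} (h : IsSymmetricAlgebra φ)
    {ℓ m : ℕ} (e : MvPolynomial (Fin ℓ) A ≃ₐ[Algebra.adjoin R {φ (0, 1)}]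
      MvPolynomial (Fin m) (Algebra.adjoin R {φ (0, 1)})) : IsStablyFree R M := by
  have hspan : Submodule.span R {φ (0, 1)} = LinearMap.range (φ ∘ₗ LinearMap.inr R M R) := by
    rw [← LinearMap.range_toSpanSingleton]
    congr 1
    ext
    simp
  obtain ⟨ψ, hψ, hψφ⟩ := exists_linearMap_adjoin_range_eq_top _ hspan
  exact isStablyFree_of_stablyPolynomial h hψ hψφ e

end ResidualVariable

lemma rankAtStalk_prod_self {R M : Type*} [CommRing R] [AddCommGroup M] [Module R M]
    [Module.Finite R M] [Module.Flat R M] (p : PrimeSpectrum R) :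
    Module.rankAtStalk (M × R) p = Module.rankAtStalk M p + 1 := by
  have := p.nontrivial
  simp [Module.rankAtStalk_prod]

theorem symmetricAlgebra_residualVariable_not_stablyPolynomial_general
    (R M A : Type*) [CommRing R] [AddCommGroup M] [Module R M] [Module.Finite R M]
    [Module.Projective R M] (r : ℕ)
    (hrank : ∀ (P : Ideal R) (_ : P.IsPrime),
      Module.finrank (Localization.AtPrime P) (LocalizedModule P.primeCompl M) = r)
    (hM : ¬ IsStablyFree R M)
    [CommRing A] [Algebra R A] (φ : (M × R) →ₗ[R] A)
    (hφ : IsSymAlgebra R (M × R) A φ) (W : A) (hW : W = φ (0, 1)) :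
    IsAffineFibration R A (r + 1) ∧
      IsResidualVariable R A (r + 1) 1 (fun _ => W) ∧
      ¬ ∃ ℓ : ℕ,
        Nonempty (MvPolynomial (Fin ℓ) A ≃ₐ[↥(Algebra.adjoin R {W})]
          MvPolynomial (Fin (ℓ + r)) ↥(Algebra.adjoin R {W})) := by
  subst hW
  have h := hφ.isSymmetricAlgebra
  have hr (p : PrimeSpectrum R) : Module.rankAtStalk M p = r := hrank p.asIdeal p.isPrime
  refine ⟨isAffineFibration_of_isSymmetricAlgebra (fun p => ?_) h, ?_, ?_⟩
  · rw [rankAtStalk_prod_self, hr]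
  · simpa using isResidualVariable_of_isSymmetricAlgebra hr h (.singleton (Fin 1) R)
  · rintro ⟨ℓ, ⟨e⟩⟩
    exact hM (isStablyFree_of_stablyPolynomial_adjoin h e)

/-- Let `R` be a Noetherian domain, `M` a finitely generated projective `R`-module of
constant rank `r ≥ 1` which is not stably free, `A = Sym_R (M ⊕ R)` and `W ∈ A` the
degree-one element corresponding to `1 ∈ R`.  Then `A` is an `𝔸^{r+1}`-fibration over
`R`, `W` is a residual variable of `A` over `R`, but `A` is not a stably polynomial
algebra over `R[W]`. -/
theorem symmetricAlgebra_residualVariable_not_stablyPolynomial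
    (R M A : Type*) [CommRing R] [IsDomain R] [IsNoetherianRing R]
    [AddCommGroup M] [Module R M] [Module.Finite R M] [Module.Projective R M]
    (r : ℕ) (hr : 1 ≤ r)
    (hrank : ∀ (P : Ideal R) (_ : P.IsPrime),
      Module.finrank (Localization.AtPrime P) (LocalizedModule P.primeCompl M) = r)
    (hM : ¬ IsStablyFree R M)
    [CommRing A] [Algebra R A] (φ : (M × R) →ₗ[R] A)
    (hφ : IsSymAlgebra R (M × R) A φ) (W : A) (hW : W = φ (0, 1)) :
    IsAffineFibration R A (r + 1) ∧
      IsResidualVariable R A (r + 1) 1 (fun _ => W) ∧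
      ¬ ∃ ℓ : ℕ,
        Nonempty (MvPolynomial (Fin ℓ) A ≃ₐ[↥(Algebra.adjoin R {W})]
          MvPolynomial (Fin (ℓ + r)) ↥(Algebra.adjoin R {W})) :=
  symmetricAlgebra_residualVariable_not_stablyPolynomial_general R M A r hrank hM φ hφ W hW
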